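/- (Talagrand's convex distance inequality) Let (Ω, μ) be a finite probability space and let μ^m be the product measure on Ω^m. For every A ⊆ Ω^m with μ^m(A) > 0, one has ∫_{Ω^m} exp( d_T(x, A)² / 4 ) dμ^m(x) ≤ 1/μ^m(A), and consequently, for every s > 0, P{ x ∈ Ω^m : d_T(x, A) ≥ s } ≤ e^{−s²/4} / μ^m(A). -/

import Mathlib

/-- Probability of a set `S ⊆ Ω^m` under the product measure induced by
the probability mass function `μ` on the finite space `Ω`. -/
noncomputable def Pr {Ω : Type*} [Fintype Ω] {m : ℕ} (μ : Ω → ℝ) (S : Set (Fin m → Ω)) : ℝ :=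
  ∑ x : Fin m → Ω, S.indicator (fun y => ∏ j, μ (y j)) x

/-- Talagrand's convex distance from a point `x ∈ Ω^m` to a set `A ⊆ Ω^m`:
`d_T(x,A) = sup { inf_{y ∈ A} ∑ j, α j · 1(x j ≠ y j) : α j ≥ 0, ∑ j, α j ² ≤ 1 }`. -/
noncomputable def convexDist {Ω : Type*} [DecidableEq Ω] {m : ℕ}
    (x : Fin m → Ω) (A : Set (Fin m → Ω)) : ℝ :=
  sSup { z : ℝ | ∃ α : Fin m → ℝ, (∀ j, 0 ≤ α j) ∧ (∑ j, α j ^ 2) ≤ 1 ∧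
    z = sInf { t : ℝ | ∃ y ∈ A, t = ∑ j, if x j ≠ y j then α j else 0 } }

/-- The set of `0`-`1` vectors recording the coordinates where `x` differs from a point of `A`. -/
def mismatchSet {Ω : Type*} [DecidableEq Ω] {m : ℕ} (x : Fin m → Ω) (A : Set (Fin m → Ω)) :
    Set (Fin m → ℝ) :=
  (fun y j => if x j ≠ y j then (1 : ℝ) else 0) '' A

/-- The points `y` such that prepending `ω` to `y` gives a point of `A`. -/
def fibre {Ω : Type*} {m : ℕ} (ω : Ω) (A : Set (Fin (m + 1) → Ω)) : Set (Fin m → Ω) :=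
  {y | (Fin.cons ω y : Fin (m + 1) → Ω) ∈ A}

lemma fibre_subset_image_tail {Ω : Type*} {m : ℕ} (ω : Ω) (A : Set (Fin (m + 1) → Ω)) :
    fibre ω A ⊆ Fin.tail '' A :=
  fun _ hy => ⟨_, hy, Fin.tail_cons _ _⟩

section ConvexHull

variable {Ω : Type*} [DecidableEq Ω] {m : ℕ}

lemma convexDist_nonneg (x : Fin m → Ω) (A : Set (Fin m → Ω)) : 0 ≤ convexDist x A := by
  refine Real.sSup_nonneg ?_
  rintro z ⟨α, hα, -, rfl⟩
  refine Real.sInf_nonneg ?_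
  rintro t ⟨y, -, rfl⟩
  refine Finset.sum_nonneg fun j _ => ?_
  split_ifs
  exacts [hα j, le_rfl]

lemma convexDist_sq_le_of_mem_convexHull {x : Fin m → Ω} {A : Set (Fin m → Ω)} {v : Fin m → ℝ}
    (hv : v ∈ convexHull ℝ (mismatchSet x A)) : convexDist x A ^ 2 ≤ ∑ j, v j ^ 2 := by
  have hs : 0 ≤ ∑ j, v j ^ 2 := Finset.sum_nonneg fun j _ => sq_nonneg _
  suffices h : convexDist x A ≤ √(∑ j, v j ^ 2) by
    calc convexDist x A ^ 2 ≤ √(∑ j, v j ^ 2) ^ 2 :=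
          pow_le_pow_left₀ (convexDist_nonneg x A) h 2
      _ = _ := Real.sq_sqrt hs
  refine Real.sSup_le ?_ (Real.sqrt_nonneg _)
  rintro z ⟨α, hα, hα1, rfl⟩
  set c := sInf { t : ℝ | ∃ y ∈ A, t = ∑ j, if x j ≠ y j then α j else 0 }
  have hlin : IsLinearMap ℝ fun u : Fin m → ℝ => ∑ j, α j * u j :=
    ⟨fun u w => by simp [mul_add, Finset.sum_add_distrib],
      fun a u => by simp [Finset.mul_sum, mul_left_comm]⟩
  have hsub : mismatchSet x A ⊆ {u | c ≤ ∑ j, α j * u j} := by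
    rintro _ ⟨y, hy, rfl⟩
    simp only [mul_ite, mul_one, mul_zero, Set.mem_ofPred_eq]
    refine csInf_le ⟨0, ?_⟩ ⟨y, hy, rfl⟩
    rintro t ⟨y, -, rfl⟩
    refine Finset.sum_nonneg fun j _ => ?_
    split_ifs
    exacts [hα j, le_rfl]
  have hcv : c ≤ ∑ j, α j * v j := convexHull_min hsub (convex_halfSpace_ge hlin c) hv
  refine hcv.trans (Real.le_sqrt_of_sq_le ?_)
  calc (∑ j, α j * v j) ^ 2 ≤ (∑ j, α j ^ 2) * ∑ j, v j ^ 2 :=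
        Finset.sum_mul_sq_le_sq_mul_sq _ _ _
    _ ≤ 1 * ∑ j, v j ^ 2 := by gcongr
    _ = _ := one_mul _

lemma cons_zero_mem_convexHull_mismatchSet {ω : Ω} {x : Fin m → Ω} {A : Set (Fin (m + 1) → Ω)}
    {u : Fin m → ℝ} (hu : u ∈ convexHull ℝ (mismatchSet x (fibre ω A))) :
    (Fin.cons 0 u : Fin (m + 1) → ℝ) ∈ convexHull ℝ (mismatchSet (Fin.cons ω x) A) := by
  let f : (Fin m → ℝ) →ₗ[ℝ] (Fin (m + 1) → ℝ) :=
    { toFun := fun u => Fin.cons 0 u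
      map_add' := fun u w => by ext j; refine Fin.cases ?_ (fun i => ?_) j <;> simp
      map_smul' := fun a u => by ext j; refine Fin.cases ?_ (fun i => ?_) j <;> simp }
  have h : f u ∈ convexHull ℝ (f '' mismatchSet x (fibre ω A)) := by
    rw [← f.image_convexHull]
    exact ⟨u, hu, rfl⟩
  refine convexHull_mono ?_ h
  rintro _ ⟨_, ⟨y, hy, rfl⟩, rfl⟩
  refine ⟨Fin.cons ω y, hy, ?_⟩
  ext j
  refine Fin.cases ?_ (fun i => ?_) j <;> simp [f]

lemma exists_cons_mem_convexHull_mismatchSet (ω : Ω) {x : Fin m → Ω} {A : Set (Fin (m + 1) → Ω)}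
    {w : Fin m → ℝ} (hw : w ∈ convexHull ℝ (mismatchSet x (Fin.tail '' A))) :
    ∃ c : ℝ, 0 ≤ c ∧ c ≤ 1 ∧
      (Fin.cons c w : Fin (m + 1) → ℝ) ∈ convexHull ℝ (mismatchSet (Fin.cons ω x) A) := by
  let f : (Fin (m + 1) → ℝ) →ₗ[ℝ] (Fin m → ℝ) :=
    { toFun := fun u => Fin.tail u
      map_add' := fun u w => rfl
      map_smul' := fun a u => rfl }
  have hsub : mismatchSet x (Fin.tail '' A) ⊆ f '' mismatchSet (Fin.cons ω x) A := by
    rintro _ ⟨_, ⟨y, hy, rfl⟩, rfl⟩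
    refine ⟨_, ⟨y, hy, rfl⟩, ?_⟩
    ext j
    by_cases h : x j = y j.succ <;> simp [f, Fin.tail_def, h]
  have h := convexHull_mono hsub hw
  rw [← f.image_convexHull] at h
  obtain ⟨v, hv, rfl⟩ := h
  have hv0 : v 0 ∈ Set.Icc (0 : ℝ) 1 := by
    have h1 : mismatchSet (Fin.cons ω x : Fin (m + 1) → Ω) A ⊆
        (LinearMap.proj 0 : (Fin (m + 1) → ℝ) →ₗ[ℝ] ℝ) ⁻¹' Set.Icc 0 1 := by
      rintro _ ⟨y, -, rfl⟩
      simp only [Set.mem_preimage, LinearMap.proj_apply]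
      split_ifs <;> simp
    exact convexHull_min h1 ((convex_Icc 0 1).linear_preimage _) hv
  refine ⟨v 0, hv0.1, hv0.2, ?_⟩
  have : (Fin.cons (v 0) (f v) : Fin (m + 1) → ℝ) = v := Fin.cons_self_tail v
  rwa [this]

lemma exists_mem_convexHull_mismatchSet_cons {ω : Ω} {x : Fin m → Ω} {A : Set (Fin (m + 1) → Ω)}
    {u w : Fin m → ℝ} {θ : ℝ} (hθ0 : 0 ≤ θ) (hθ1 : θ ≤ 1)
    (hu : θ = 0 ∨ u ∈ convexHull ℝ (mismatchSet x (fibre ω A)))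
    (hw : w ∈ convexHull ℝ (mismatchSet x (Fin.tail '' A))) :
    ∃ v ∈ convexHull ℝ (mismatchSet (Fin.cons ω x) A),
      ∑ j, v j ^ 2 ≤ (1 - θ) ^ 2 + (θ * ∑ j, u j ^ 2 + (1 - θ) * ∑ j, w j ^ 2) := by
  obtain ⟨c, hc0, hc1, hc⟩ := exists_cons_mem_convexHull_mismatchSet ω hw
  have hc2 : c ^ 2 ≤ 1 := pow_le_one₀ hc0 hc1
  rcases hu with rfl | hu
  · refine ⟨_, hc, ?_⟩
    simp [Fin.sum_univ_succ, hc2]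
  · refine ⟨_, convex_convexHull ℝ _ (cons_zero_mem_convexHull_mismatchSet hu) hc hθ0
      (sub_nonneg.2 hθ1) (by ring), ?_⟩
    rw [Fin.sum_univ_succ]
    refine add_le_add ?_ ?_
    · simp only [Pi.add_apply, Pi.smul_apply, Fin.cons_zero, smul_eq_mul]
      nlinarith [sq_nonneg (1 - θ)]
    · rw [Finset.mul_sum, Finset.mul_sum, ← Finset.sum_add_distrib]
      refine Finset.sum_le_sum fun j _ => ?_
      simp only [Pi.add_apply, Pi.smul_apply, Fin.cons_succ, smul_eq_mul]
      nlinarith [mul_nonneg (mul_nonneg hθ0 (sub_nonneg.2 hθ1)) (sq_nonneg (u j - w j))]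

end ConvexHull

lemma exp_add_exp_neg_le_two {t : ℝ} (ht0 : 0 ≤ t) (ht1 : t ≤ 1 / 2) :
    Real.exp (t - t ^ 2) + Real.exp (-t) ≤ 2 := by
  have hu0 : 0 ≤ t - t ^ 2 := by nlinarith
  have hu1 : t - t ^ 2 ≤ t := by nlinarith
  have h1 := Real.exp_bound' hu0 (by linarith) (n := 3) (by norm_num)
  have h2 := Real.exp_bound (x := -t) (by rw [abs_neg, abs_of_nonneg ht0]; linarith) (n := 3)
    (by norm_num)
  rw [abs_neg, abs_of_nonneg ht0] at h2
  have h3 := (abs_le.1 h2).2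
  norm_num [Finset.sum_range_succ, Nat.factorial] at h1 h3
  have h4 : (t - t ^ 2) ^ 3 ≤ t ^ 3 := pow_le_pow_left₀ hu0 hu1 3
  have h5 : t ^ 4 ≤ t ^ 3 * (1 / 2) := by
    rw [pow_succ t 3]
    gcongr
  nlinarith [pow_nonneg ht0 3]

lemma exp_quarter_le : Real.exp (1 / 4) ≤ 13 / 10 := by
  have h1 := Real.exp_bound' (x := 1 / 4) (by norm_num) (by norm_num) (n := 3) (by norm_num)
  norm_num [Finset.sum_range_succ, Nat.factorial] at h1 ⊢
  linarith

lemma exists_exp_le_two_sub {r : ℝ} (hr0 : 0 < r) (hr1 : r ≤ 1) :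
    ∃ θ : ℝ, 0 ≤ θ ∧ θ ≤ 1 ∧ Real.exp ((1 - θ) ^ 2 / 4 - θ * Real.log r) ≤ 2 - r := by
  have hlog : Real.log r ≤ 0 := Real.log_nonpos hr0.le hr1
  rcases le_total (-(1 / 2)) (Real.log r) with h | h
  · refine ⟨1 + 2 * Real.log r, by linarith, by linarith, ?_⟩
    have := exp_add_exp_neg_le_two (t := -Real.log r) (by linarith) (by linarith)
    rw [neg_neg, Real.exp_log hr0] at this
    convert le_sub_iff_add_le.2 this using 2
    ring
  · refine ⟨0, le_rfl, zero_le_one, ?_⟩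
    have hr : r ≤ 7 / 10 := by
      rw [Real.log_le_iff_le_exp hr0, Real.exp_neg] at h
      have hq := Real.quadratic_le_exp_of_nonneg (x := 1 / 2) (by norm_num)
      refine h.trans (inv_le_of_inv_le₀ (by norm_num) (le_trans (by norm_num) hq))
    norm_num
    have := exp_quarter_le
    norm_num at this
    linarith

lemma sum_mul_exp_convexComb_le {ι : Type*} [Fintype ι] {p a b : ι → ℝ} (hp : ∀ i, 0 ≤ p i)
    {θ α β : ℝ} (hθ0 : 0 ≤ θ) (hθ1 : θ ≤ 1)
    (ha : θ = 0 ∨ ∑ i, p i * Real.exp (a i) ≤ Real.exp α)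
    (hb : ∑ i, p i * Real.exp (b i) ≤ Real.exp β) :
    ∑ i, p i * Real.exp (θ * a i + (1 - θ) * b i) ≤ Real.exp (θ * α + (1 - θ) * β) := by
  rcases ha with rfl | ha
  · simpa using hb
  have key : ∀ i, p i * Real.exp (θ * a i + (1 - θ) * b i) ≤
      Real.exp (θ * α + (1 - θ) * β) * (θ * Real.exp (-α) * (p i * Real.exp (a i)) +
        (1 - θ) * Real.exp (-β) * (p i * Real.exp (b i))) := by
    intro i
    have hconv := convexOn_exp.2 (Set.mem_univ (a i - α)) (Set.mem_univ (b i - β)) hθ0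
      (sub_nonneg.2 hθ1) (by ring)
    simp only [smul_eq_mul] at hconv
    calc p i * Real.exp (θ * a i + (1 - θ) * b i)
        = p i * (Real.exp (θ * α + (1 - θ) * β) *
            Real.exp (θ * (a i - α) + (1 - θ) * (b i - β))) := by
          rw [← Real.exp_add]; ring_nf
      _ ≤ p i * (Real.exp (θ * α + (1 - θ) * β) *
            (θ * Real.exp (a i - α) + (1 - θ) * Real.exp (b i - β))) := by
          gcongr
          exact hp i
      _ = _ := by
          rw [sub_eq_add_neg (a i), sub_eq_add_neg (b i), Real.exp_add (a i), Real.exp_add (b i)]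
          ring
  refine (Finset.sum_le_sum fun i _ => key i).trans ?_
  rw [← Finset.mul_sum, Finset.sum_add_distrib, ← Finset.mul_sum, ← Finset.mul_sum]
  refine mul_le_of_le_one_right (Real.exp_pos _).le ?_
  calc _ ≤ θ * Real.exp (-α) * Real.exp α + (1 - θ) * Real.exp (-β) * Real.exp β := by
        have := sub_nonneg.2 hθ1
        gcongr
    _ = 1 := by
        rw [mul_assoc, mul_assoc, ← Real.exp_add, ← Real.exp_add]
        simp

section Probability

variable {Ω : Type*} [Fintype Ω] {m : ℕ} {μ : Ω → ℝ}

lemma sum_cons {M : Type*} [AddCommMonoid M] (f : (Fin (m + 1) → Ω) → M) :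
    ∑ x, f x = ∑ ω, ∑ x : Fin m → Ω, f (Fin.cons ω x) := by
  rw [← Fintype.sum_prod_type']
  exact (Fintype.sum_equiv (Fin.consEquiv fun _ => Ω) _ _ fun _ => rfl).symm

lemma Pr_nonneg (hμ0 : ∀ ω, 0 ≤ μ ω) (S : Set (Fin m → Ω)) : 0 ≤ Pr μ S :=
  Finset.sum_nonneg fun _ _ =>
    Set.indicator_nonneg (fun y _ => Finset.prod_nonneg fun j _ => hμ0 (y j)) _

lemma Pr_mono (hμ0 : ∀ ω, 0 ≤ μ ω) {S T : Set (Fin m → Ω)} (h : S ⊆ T) : Pr μ S ≤ Pr μ T :=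
  Finset.sum_le_sum fun x _ =>
    Set.indicator_le_indicator_of_subset h (fun y => Finset.prod_nonneg fun j _ => hμ0 (y j)) x

lemma Pr_succ (S : Set (Fin (m + 1) → Ω)) :
    Pr μ S = ∑ ω, μ ω * Pr μ (fibre ω S) := by
  classical
  simp only [Pr, sum_cons, Finset.mul_sum]
  refine Finset.sum_congr rfl fun ω _ => Finset.sum_congr rfl fun x _ => ?_
  simp [Set.indicator_apply, fibre, Fin.prod_univ_succ]

lemma Pr_le_Pr_image_tail (hμ0 : ∀ ω, 0 ≤ μ ω) (hμ1 : ∑ ω, μ ω = 1)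
    (A : Set (Fin (m + 1) → Ω)) : Pr μ A ≤ Pr μ (Fin.tail '' A : Set (Fin m → Ω)) := by
  rw [Pr_succ]
  calc _ ≤ ∑ ω, μ ω * Pr μ (Fin.tail '' A : Set (Fin m → Ω)) :=
        Finset.sum_le_sum fun ω _ => mul_le_mul_of_nonneg_left
          (Pr_mono hμ0 (fibre_subset_image_tail ω A)) (hμ0 ω)
    _ = _ := by rw [← Finset.sum_mul, hμ1, one_mul]

/-- One coordinate of the induction: the exponential moment over a single fibre. -/
lemma exists_fibre_sum_exp_le [DecidableEq Ω] (hμ0 : ∀ ω, 0 ≤ μ ω)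
    (ih : ∀ A : Set (Fin m → Ω), 0 < Pr μ A → ∃ v : (Fin m → Ω) → Fin m → ℝ,
      (∀ x, v x ∈ convexHull ℝ (mismatchSet x A)) ∧
        ∑ x, (∏ j, μ (x j)) * Real.exp ((∑ j, v x j ^ 2) / 4) ≤ 1 / Pr μ A)
    {A : Set (Fin (m + 1) → Ω)} (hB : 0 < Pr μ (Fin.tail '' A : Set (Fin m → Ω))) (ω : Ω) :
    ∃ v : (Fin m → Ω) → Fin (m + 1) → ℝ,
      (∀ x, v x ∈ convexHull ℝ (mismatchSet (Fin.cons ω x) A)) ∧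
        ∑ x, (∏ j, μ (x j)) * Real.exp ((∑ j, v x j ^ 2) / 4) ≤
          1 / Pr μ (Fin.tail '' A : Set (Fin m → Ω)) *
            (2 - Pr μ (fibre ω A) /
              Pr μ (Fin.tail '' A : Set (Fin m → Ω))) := by
  obtain ⟨w, hw, hwsum⟩ := ih _ hB
  set b := Pr μ (Fin.tail '' A : Set (Fin m → Ω))
  set a := Pr μ (fibre ω A)
  have hab : a ≤ b := Pr_mono hμ0 (fibre_subset_image_tail ω A)
  have hexp : ∀ {c : ℝ}, 0 < c → 1 / c = Real.exp (-Real.log c) := fun hc => by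
    rw [Real.exp_neg, Real.exp_log hc, one_div]
  obtain ⟨θ, u, hθ0, hθ1, hu, husum, hθ⟩ : ∃ (θ : ℝ) (u : (Fin m → Ω) → Fin m → ℝ),
      0 ≤ θ ∧ θ ≤ 1 ∧
      (∀ x, θ = 0 ∨ u x ∈ convexHull ℝ (mismatchSet x (fibre ω A))) ∧
      (θ = 0 ∨ ∑ x, (∏ j, μ (x j)) * Real.exp ((∑ j, u x j ^ 2) / 4) ≤
        Real.exp (-Real.log a)) ∧
      Real.exp ((1 - θ) ^ 2 / 4 - θ * (Real.log a - Real.log b)) ≤ 2 - a / b := by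
    rcases (Pr_nonneg hμ0 _ : 0 ≤ a).eq_or_lt with h0 | h0
    · refine ⟨0, 0, le_rfl, zero_le_one, fun _ => Or.inl rfl, Or.inl rfl, ?_⟩
      rw [show a = 0 from h0.symm]
      have := exp_quarter_le
      norm_num at this ⊢
      linarith
    · obtain ⟨u, hu, husum⟩ := ih _ h0
      obtain ⟨θ, hθ0, hθ1, hθ⟩ := exists_exp_le_two_sub (div_pos h0 hB) ((div_le_one hB).2 hab)
      rw [Real.log_div h0.ne' hB.ne'] at hθ
      exact ⟨θ, u, hθ0, hθ1, fun x => Or.inr (hu x), Or.inr (husum.trans_eq (hexp h0)), hθ⟩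
  choose v hv hvle using fun x =>
    exists_mem_convexHull_mismatchSet_cons hθ0 hθ1 (hu x) (hw x)
  refine ⟨v, hv, ?_⟩
  have hp : ∀ x : Fin m → Ω, 0 ≤ ∏ j, μ (x j) := fun x => Finset.prod_nonneg fun j _ => hμ0 _
  calc ∑ x, (∏ j, μ (x j)) * Real.exp ((∑ j, v x j ^ 2) / 4)
      ≤ ∑ x, Real.exp ((1 - θ) ^ 2 / 4) * ((∏ j, μ (x j)) *
          Real.exp (θ * ((∑ j, u x j ^ 2) / 4) + (1 - θ) * ((∑ j, w x j ^ 2) / 4))) := by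
        refine Finset.sum_le_sum fun x _ => ?_
        rw [mul_left_comm, ← Real.exp_add]
        refine mul_le_mul_of_nonneg_left (Real.exp_le_exp.2 ?_) (hp x)
        linarith [hvle x]
    _ ≤ Real.exp ((1 - θ) ^ 2 / 4) *
          Real.exp (θ * (-Real.log a) + (1 - θ) * (-Real.log b)) := by
        rw [← Finset.mul_sum]
        exact mul_le_mul_of_nonneg_left (sum_mul_exp_convexComb_le hp hθ0 hθ1 husum
          (hwsum.trans_eq (hexp hB))) (Real.exp_pos _).le
    _ = 1 / b * Real.exp ((1 - θ) ^ 2 / 4 - θ * (Real.log a - Real.log b)) := by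
        rw [hexp hB, ← Real.exp_add, ← Real.exp_add]
        ring_nf
    _ ≤ 1 / b * (2 - a / b) := mul_le_mul_of_nonneg_left hθ (one_div_nonneg.2 hB.le)

lemma exists_convexHull_sum_exp_le [DecidableEq Ω] (hμ0 : ∀ ω, 0 ≤ μ ω) (hμ1 : ∑ ω, μ ω = 1)
    (A : Set (Fin m → Ω)) (hA : 0 < Pr μ A) : ∃ v : (Fin m → Ω) → Fin m → ℝ,
      (∀ x, v x ∈ convexHull ℝ (mismatchSet x A)) ∧
        ∑ x, (∏ j, μ (x j)) * Real.exp ((∑ j, v x j ^ 2) / 4) ≤ 1 / Pr μ A := by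
  induction m with
  | zero =>
    obtain ⟨y, hy⟩ : A.Nonempty := by
      rw [Set.nonempty_iff_ne_empty]
      rintro rfl
      simp [Pr] at hA
    have hAu : A = Set.univ := Set.eq_univ_of_forall fun z => Subsingleton.elim y z ▸ hy
    refine ⟨0, fun x => subset_convexHull ℝ _ ⟨y, hy, Subsingleton.elim _ _⟩, ?_⟩
    simp [hAu, Pr]
  | succ m ih =>
    have hAB := Pr_le_Pr_image_tail hμ0 hμ1 A
    have hB := hA.trans_le hAB
    choose v hv hvsum using exists_fibre_sum_exp_le hμ0 ih hB
    refine ⟨fun x => v (x 0) (Fin.tail x), fun x => ?_, ?_⟩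
    · simpa using hv (x 0) (Fin.tail x)
    set b := Pr μ (Fin.tail '' A : Set (Fin m → Ω))
    calc _ = ∑ ω, μ ω * ∑ x : Fin m → Ω,
          (∏ j, μ (x j)) * Real.exp ((∑ j, v ω x j ^ 2) / 4) := by
          rw [sum_cons]
          simp [Fin.prod_univ_succ, Finset.mul_sum, mul_assoc]
      _ ≤ ∑ ω, μ ω * (1 / b *
            (2 - Pr μ (fibre ω A) / b)) :=
          Finset.sum_le_sum fun ω _ => mul_le_mul_of_nonneg_left (hvsum ω) (hμ0 ω)
      _ = 1 / b * (2 - Pr μ A / b) := by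
          have h : ∀ ω, μ ω * (1 / b * (2 - Pr μ (fibre ω A) / b)) =
              1 / b * 2 * μ ω - 1 / b / b * (μ ω * Pr μ (fibre ω A)) := fun ω => by ring
          simp only [h, Finset.sum_sub_distrib, ← Finset.mul_sum, hμ1, ← Pr_succ]
          ring
      _ ≤ 1 / Pr μ A := by
          rw [← sub_nonneg]
          have : 1 / Pr μ A - 1 / b * (2 - Pr μ A / b) =
              (b - Pr μ A) ^ 2 / (Pr μ A * b ^ 2) := by
            field_simp
            ring
          rw [this]
          positivity

end Probability

/-- Talagrand's convex distance inequality: For every `A ⊆ Ω^m` with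
`μ^m(A) > 0`, `∫ exp(d_T(x,A)²/4) dμ^m(x) ≤ 1/μ^m(A)`, and consequently for every
`s > 0`, `P{ d_T(x,A) ≥ s } ≤ e^(−s²/4) / μ^m(A)`. -/
theorem talagrand_convex_distance
    {Ω : Type*} [Fintype Ω] [Nonempty Ω] [DecidableEq Ω]
    (μ : Ω → ℝ) (hμ0 : ∀ ω, 0 ≤ μ ω) (hμ1 : ∑ ω, μ ω = 1)
    (m : ℕ) (hm : 1 ≤ m)
    (A : Set (Fin m → Ω)) (hA : 0 < Pr μ A) :
    (∑ x : Fin m → Ω, (∏ j, μ (x j)) * Real.exp (convexDist x A ^ 2 / 4) ≤ 1 / Pr μ A)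
      ∧ ∀ s : ℝ, 0 < s →
          Pr μ {x : Fin m → Ω | s ≤ convexDist x A} ≤ Real.exp (-s ^ 2 / 4) / Pr μ A := by
  have hp : ∀ x : Fin m → Ω, 0 ≤ ∏ j, μ (x j) := fun x => Finset.prod_nonneg fun j _ => hμ0 _
  have hmain : ∑ x : Fin m → Ω, (∏ j, μ (x j)) * Real.exp (convexDist x A ^ 2 / 4) ≤
      1 / Pr μ A := by
    obtain ⟨v, hv, hvsum⟩ := exists_convexHull_sum_exp_le hμ0 hμ1 A hA
    refine le_trans (Finset.sum_le_sum fun x _ => mul_le_mul_of_nonneg_left ?_ (hp x)) hvsum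
    have := convexDist_sq_le_of_mem_convexHull (hv x)
    gcongr
  refine ⟨hmain, fun s hs => ?_⟩
  have hmarkov : Real.exp (s ^ 2 / 4) * Pr μ {x : Fin m → Ω | s ≤ convexDist x A} ≤
      1 / Pr μ A := by
    refine le_trans ?_ hmain
    rw [Pr, Finset.mul_sum]
    refine Finset.sum_le_sum fun x _ => ?_
    by_cases hx : s ≤ convexDist x A
    · rw [Set.indicator_of_mem (by exact hx), mul_comm]
      have := hp x
      gcongr
    · rw [Set.indicator_of_notMem (by exact hx), mul_zero]
      exact mul_nonneg (hp x) (Real.exp_pos _).le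
  rw [neg_div, Real.exp_neg, div_eq_mul_one_div, ← div_eq_inv_mul, le_div_iff₀' (Real.exp_pos _)]
  exact hmarkov
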